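/- arXiv:1905.10119 — 3 statements merged into one kernel-verified Lean document; each statement's English description precedes it below -/
import Mathlib

section
/- Let C be a regular category and X an object with global support. Then X is regularly-coextensive if and only if for every regular epimorphism q : X → Q and every binary product diagram (π₁ : X → A, π₂ : X → B), there exist morphisms q₁ : A → Q₁, q₂ : B → Q₂, p₁ : Q → Q₁ and p₂ : Q → Q₂ such that q₁∘π₁ = p₁∘q and q₂∘π₂ = p₂∘q and the pair (p₁ : Q → Q₁, p₂ : Q → Q₂) is a binary product diagram. -/
open CategoryTheory CategoryTheory.Limits

universe v u

variable {C : Type u} [Category.{v} C]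

/-- `(p, q)` is a binary product diagram, exhibiting `X` as the product of `A` and `B`. -/
def IsBinaryProduct {X A B : C} (p : X ⟶ A) (q : X ⟶ B) : Prop :=
  Nonempty (IsLimit (BinaryFan.mk p q))

/-- `p : X ⟶ A` is a product projection. -/
def IsProductProjection {X A : C} (p : X ⟶ A) : Prop :=
  ∃ (B : C) (q : X ⟶ B), IsBinaryProduct p q

/-- A pushout square whose two legs belong to the class `M`. -/
def IsMPushout (M : MorphismProperty C) {Z A B P : C}
    (f : Z ⟶ A) (g : Z ⟶ B) (a : A ⟶ P) (b : B ⟶ P) : Prop :=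
  IsPushout f g a b ∧ M a ∧ M b

/-- `X` is an `M`-coextensive object. -/
structure MCoextensive (M : MorphismProperty C) (X : C) : Prop where
  pushout_exists : ∀ ⦃Y A : C⦄ (m : X ⟶ Y) (p : X ⟶ A), M m → IsProductProjection p →
    ∃ (P : C) (a : A ⟶ P) (b : Y ⟶ P), IsMPushout M p m a b
  isBinaryProduct_iff : ∀ ⦃A₁ A₂ Y B₁ B₂ : C⦄ (π₁ : X ⟶ A₁) (π₂ : X ⟶ A₂)
    (f : X ⟶ Y) (p₁ : A₁ ⟶ B₁) (p₂ : A₂ ⟶ B₂) (π₁' : Y ⟶ B₁) (π₂' : Y ⟶ B₂),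
    IsBinaryProduct π₁ π₂ → M f → M p₁ → M p₂ →
    π₁ ≫ p₁ = f ≫ π₁' → π₂ ≫ p₂ = f ≫ π₂' →
    (IsBinaryProduct π₁' π₂' ↔ (IsMPushout M π₁ f p₁ π₁' ∧ IsMPushout M π₂ f p₂ π₂'))

/-- The class of product projections. -/
def projections (C : Type u) [Category.{v} C] : MorphismProperty C :=
  fun _ _ f => IsProductProjection f

/-- `X` is projection-coextensive. -/
def ProjectionCoextensive (X : C) : Prop := MCoextensive (projections C) X

/-- `f` is a regular epimorphism (a coequalizer of some parallel pair). -/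
def IsRegularEpimorphism {X Y : C} (f : X ⟶ Y) : Prop :=
  ∃ (W : C) (a b : W ⟶ X) (h : a ≫ f = b ≫ f), Nonempty (IsColimit (Cofork.ofπ f h))

/-- The class of regular epimorphisms. -/
def regularEpis (C : Type u) [Category.{v} C] : MorphismProperty C :=
  fun _ _ f => IsRegularEpimorphism f

/-- `X` is regularly-coextensive. -/
def RegularlyCoextensive (X : C) : Prop := MCoextensive (regularEpis C) X

/-- A regular category: finitely complete, coequalizers of kernel pairs, and
regular epimorphisms are stable under pullback. -/
class IsRegularCategory (C : Type u) [Category.{v} C] [HasFiniteLimits C] : Prop where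
  hasCoequalizer_kernelPair : ∀ {X Y : C} (f : X ⟶ Y),
    HasCoequalizer (pullback.fst f f) (pullback.snd f f)
  regularEpi_stable : ∀ {X Y Z : C} (f : X ⟶ Y) (g : Z ⟶ Y),
    IsRegularEpimorphism f → IsRegularEpimorphism (pullback.snd f g)

/-- `X` has global support: the unique morphism to the terminal object is a regular epi. -/
def HasGlobalSupport [HasTerminal C] (X : C) : Prop :=
  IsRegularEpimorphism (terminal.from X)

theorem isRegularEpimorphism_iff' {C : Type u} [Category.{v} C] {X Y : C} (f : X ⟶ Y) :
    IsRegularEpimorphism f ↔ IsRegularEpi f := by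
  constructor
  · rintro ⟨W, a, b, h, ⟨hc⟩⟩
    exact ⟨⟨⟨W, a, b, h, hc⟩⟩⟩
  · rintro ⟨⟨⟨W, a, b, h, hc⟩⟩⟩
    exact ⟨W, a, b, h, ⟨hc⟩⟩

theorem regular_of_isRegularCategory (C : Type u) [Category.{v} C] [HasFiniteLimits C]
    [IsRegularCategory C] : Regular C where
  hasCoequalizer_of_isKernelPair := by
    intro X Y Z f g₁ g₂ h
    have := IsRegularCategory.hasCoequalizer_kernelPair f
    let e : Z ≅ pullback f f := h.isoPullback
    have h1 : e.hom ≫ pullback.fst f f = g₁ := h.isoPullback_hom_fst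
    have h2 : e.hom ≫ pullback.snd f f = g₂ := h.isoPullback_hom_snd
    let i : parallelPair (pullback.fst f f) (pullback.snd f f) ≅ parallelPair g₁ g₂ :=
      parallelPair.ext e.symm (Iso.refl _) (by simp [← h1]) (by simp [← h2])
    exact hasColimit_of_iso i.symm
  regularEpiIsStableUnderBaseChange := by
    refine ⟨?_⟩
    intro X Y Y' S f g f' g' h hg
    have h1 := IsRegularCategory.regularEpi_stable g f ((isRegularEpimorphism_iff' g).2 hg)
    rw [isRegularEpimorphism_iff'] at h1
    have h2 : h.isoPullback.hom ≫ pullback.snd g f = g' := h.isoPullback_hom_snd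
    refine ⟨⟨RegularEpi.ofArrowIso (Arrow.isoMk (f := .mk (pullback.snd g f)) (g := .mk g')
      h.isoPullback.symm (Iso.refl _) (by simp)) h1.getStruct⟩⟩

section
variable {C : Type u} [Category.{v} C] [HasFiniteLimits C] [IsRegularCategory C]

theorem regEpi_right {X Y Z : C} (f : X ⟶ Y) (g : Y ⟶ Z) (h : IsRegularEpimorphism (f ≫ g)) :
    IsRegularEpimorphism g := by
  have := regular_of_isRegularCategory C
  rw [isRegularEpimorphism_iff'] at *
  have := strongEpi_of_strongEpi f g
  infer_instance

theorem regEpi_comp {X Y Z : C} (f : X ⟶ Y) (g : Y ⟶ Z) (hf : IsRegularEpimorphism f)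
    (hg : IsRegularEpimorphism g) : IsRegularEpimorphism (f ≫ g) := by
  have := regular_of_isRegularCategory C
  rw [isRegularEpimorphism_iff'] at *
  have : StrongEpi (f ≫ g) := strongEpi_comp f g
  infer_instance

theorem globalSupport_of_hom {X Y : C} (f : X ⟶ Y) (h : HasGlobalSupport X) :
    HasGlobalSupport Y :=
  regEpi_right f _ (by rwa [show f ≫ terminal.from Y = terminal.from X from Subsingleton.elim _ _])

theorem regEpi_fst {X A B : C} {p : X ⟶ A} {q : X ⟶ B} (h : IsBinaryProduct p q)
    (hB : HasGlobalSupport B) : IsRegularEpimorphism p := by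
  have := regular_of_isRegularCategory C
  obtain ⟨h⟩ := h
  have hp : IsPullback p q (terminal.from A) (terminal.from B) :=
    IsPullback.of_is_product' h terminalIsTerminal
  unfold HasGlobalSupport at hB
  rw [isRegularEpimorphism_iff'] at *
  exact Regular.regularEpiIsStableUnderBaseChange.of_isPullback hp.flip hB

theorem IsBinaryProduct.symm' {X A B : C} {p : X ⟶ A} {q : X ⟶ B} (h : IsBinaryProduct p q) :
    IsBinaryProduct q p := ⟨BinaryFan.isLimitFlip h.some⟩

theorem IsBinaryProduct.exists_lift {X A B T : C} {p : X ⟶ A} {q : X ⟶ B}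
    (h : IsBinaryProduct p q) (a : T ⟶ A) (b : T ⟶ B) : ∃ l : T ⟶ X, l ≫ p = a ∧ l ≫ q = b := by
  obtain ⟨l, h1, h2⟩ := BinaryFan.IsLimit.lift' h.some a b
  exact ⟨l, h1, h2⟩

theorem IsBinaryProduct.hom_ext' {X A B T : C} {p : X ⟶ A} {q : X ⟶ B}
    (h : IsBinaryProduct p q) {a b : T ⟶ X} (h1 : a ≫ p = b ≫ p) (h2 : a ≫ q = b ≫ q) : a = b :=
  BinaryFan.IsLimit.hom_ext h.some h1 h2

theorem key_pushout {X Q A B Q₁ Q₂ : C} (hgs : HasGlobalSupport X) {q : X ⟶ Q}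
    {π₁ : X ⟶ A} {π₂ : X ⟶ B} {q₁ : A ⟶ Q₁} {q₂ : B ⟶ Q₂} {p₁ : Q ⟶ Q₁} {p₂ : Q ⟶ Q₂}
    (hq : IsRegularEpimorphism q) (hπ : IsBinaryProduct π₁ π₂) (w₁ : π₁ ≫ q₁ = q ≫ p₁)
    (w₂ : π₂ ≫ q₂ = q ≫ p₂) (hp : IsBinaryProduct p₁ p₂) :
    IsMPushout (regularEpis C) π₁ q q₁ p₁ := by
  have hp₁ : IsRegularEpimorphism p₁ := regEpi_fst hp (globalSupport_of_hom (q ≫ p₂) hgs)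
  have hq₁ : IsRegularEpimorphism q₁ :=
    regEpi_right π₁ q₁ (w₁ ▸ regEpi_comp q p₁ hq hp₁)
  refine ⟨?_, hq₁, hp₁⟩
  have hB : HasGlobalSupport B := globalSupport_of_hom π₂ hgs
  have eq : Epi q := by
    rw [isRegularEpimorphism_iff'] at hq; infer_instance
  have hr := (isRegularEpimorphism_iff' q₁).1 hq₁
  have key : ∀ {T : C} (u : A ⟶ T) (v : Q ⟶ T), π₁ ≫ u = q ≫ v →
      ∀ {K : C} (k₁ k₂ : K ⟶ A), k₁ ≫ q₁ = k₂ ≫ q₁ → k₁ ≫ u = k₂ ≫ u := by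
    intro T u v huv K k₁ k₂ hk
    have hfst : IsRegularEpimorphism (prod.fst : K ⨯ B ⟶ K) :=
      regEpi_fst (q := prod.snd) ⟨prodIsProd K B⟩ hB
    have : Epi (prod.fst : K ⨯ B ⟶ K) := by
      rw [isRegularEpimorphism_iff'] at hfst; infer_instance
    obtain ⟨l₁, h11, h12⟩ := hπ.exists_lift
      (prod.fst ≫ k₁ : K ⨯ B ⟶ A) prod.snd
    obtain ⟨l₂, h21, h22⟩ := hπ.exists_lift
      (prod.fst ≫ k₂ : K ⨯ B ⟶ A) prod.snd
    have hl : l₁ ≫ q = l₂ ≫ q := by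
      apply hp.hom_ext'
      · simp only [Category.assoc, ← w₁]
        rw [reassoc_of% h11, reassoc_of% h21, hk]
      · simp only [Category.assoc, ← w₂]
        rw [reassoc_of% h12, reassoc_of% h22]
    rw [← cancel_epi (prod.fst : K ⨯ B ⟶ K), ← Category.assoc, ← Category.assoc, ← h11, ← h21,
      Category.assoc, Category.assoc, huv, reassoc_of% hl]
  refine ⟨⟨w₁⟩, ⟨PushoutCocone.IsColimit.mk _ (fun s => IsRegularEpi.desc q₁ s.inl
    (key s.inl s.inr s.condition _ _ (IsRegularEpi.w q₁))) ?_ ?_ ?_⟩⟩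
  · intro s
    exact IsRegularEpi.fac _ _ _
  · intro s
    rw [← cancel_epi q, ← reassoc_of% w₁, IsRegularEpi.fac, s.condition]
  · intro s m h1 _
    rw [← cancel_epi q₁, h1, IsRegularEpi.fac]

theorem product_of_iso {Q Q₁ Q₂ R₁ R₂ : C} {p₁ : Q ⟶ Q₁} {p₂ : Q ⟶ Q₂}
    (h : IsBinaryProduct p₁ p₂) (e₁ : Q₁ ≅ R₁) (e₂ : Q₂ ≅ R₂) :
    IsBinaryProduct (p₁ ≫ e₁.hom) (p₂ ≫ e₂.hom) := by
  refine ⟨BinaryFan.IsLimit.mk _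
    (fun f g => h.some.lift (BinaryFan.mk (f ≫ e₁.inv) (g ≫ e₂.inv))) ?_ ?_ ?_⟩
  · intro T f g
    have := h.some.fac (BinaryFan.mk (f ≫ e₁.inv) (g ≫ e₂.inv)) ⟨WalkingPair.left⟩
    dsimp at this ⊢
    rw [reassoc_of% this]; simp
  · intro T f g
    have := h.some.fac (BinaryFan.mk (f ≫ e₁.inv) (g ≫ e₂.inv)) ⟨WalkingPair.right⟩
    dsimp at this ⊢
    rw [reassoc_of% this]; simp
  · intro T f g m h1 h2
    apply BinaryFan.IsLimit.hom_ext h.some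
    · have := h.some.fac (BinaryFan.mk (f ≫ e₁.inv) (g ≫ e₂.inv)) ⟨WalkingPair.left⟩
      dsimp at this h1 ⊢
      rw [this, ← h1]; simp
    · have := h.some.fac (BinaryFan.mk (f ≫ e₁.inv) (g ≫ e₂.inv)) ⟨WalkingPair.right⟩
      dsimp at this h2 ⊢
      rw [this, ← h2]; simp

end

/-- An object with global support in a regular category is regularly-coextensive if
and only if every regular epimorphic quotient of it pushes every binary product
diagram to a binary product diagram. -/
theorem regularlyCoextensive_iff
    {C : Type u} [Category.{v} C] [HasFiniteLimits C] [IsRegularCategory C]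
    (X : C) (hgs : HasGlobalSupport X) :
    RegularlyCoextensive X ↔
      ∀ ⦃Q A B : C⦄ (q : X ⟶ Q) (π₁ : X ⟶ A) (π₂ : X ⟶ B),
        IsRegularEpimorphism q → IsBinaryProduct π₁ π₂ →
        ∃ (Q₁ Q₂ : C) (q₁ : A ⟶ Q₁) (q₂ : B ⟶ Q₂) (p₁ : Q ⟶ Q₁) (p₂ : Q ⟶ Q₂),
          π₁ ≫ q₁ = q ≫ p₁ ∧ π₂ ≫ q₂ = q ≫ p₂ ∧ IsBinaryProduct p₁ p₂ := by
  constructor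
  · intro h Q A B q π₁ π₂ hq hπ
    obtain ⟨Q₁, q₁, p₁, h₁⟩ := h.pushout_exists q π₁ hq ⟨_, _, hπ⟩
    obtain ⟨Q₂, q₂, p₂, h₂⟩ := h.pushout_exists q π₂ hq ⟨_, _, hπ.symm'⟩
    exact ⟨Q₁, Q₂, q₁, q₂, p₁, p₂, h₁.1.w, h₂.1.w,
      (h.isBinaryProduct_iff π₁ π₂ q q₁ q₂ p₁ p₂ hπ hq h₁.2.1 h₂.2.1 h₁.1.w h₂.1.w).2 ⟨h₁, h₂⟩⟩
  · intro h
    refine ⟨?_, ?_⟩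
    · rintro Y A m p hm ⟨B, p', hp⟩
      obtain ⟨Q₁, Q₂, q₁, q₂, p₁, p₂, w₁, w₂, hpr⟩ := h m p p' hm hp
      exact ⟨Q₁, q₁, p₁, key_pushout hgs hm hp w₁ w₂ hpr⟩
    · intro A₁ A₂ Y B₁ B₂ π₁ π₂ f p₁ p₂ π₁' π₂' hπ hf _ _ w₁ w₂
      constructor
      · intro hpr
        exact ⟨key_pushout hgs hf hπ w₁ w₂ hpr, key_pushout hgs hf hπ.symm' w₂ w₁ hpr.symm'⟩
      · rintro ⟨⟨s₁, _⟩, ⟨s₂, _⟩⟩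
        obtain ⟨Q₁, Q₂, q₁, q₂, r₁, r₂, v₁, v₂, hpr⟩ := h f π₁ π₂ hf hπ
        have t₁ := (key_pushout hgs hf hπ v₁ v₂ hpr).1
        have t₂ := (key_pushout hgs hf hπ.symm' v₂ v₁ hpr.symm').1
        have := product_of_iso hpr (t₁.isoIsPushout _ _ s₁) (t₂.isoIsPushout _ _ s₂)
        simpa using this
end

section
/- Let C be a regular category and X an object with global support. Then X has factorable congruences if and only if X is regularly-coextensive. -/
open CategoryTheory CategoryTheory.Limits

universe v u

variable {C : Type u} [Category.{v} C]

/-- `X` has factorable congruences: every effective equivalence relation on `X`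
(the kernel pair of a morphism `f`) is, with respect to any binary product
decomposition `(π₁, π₂)` of `X`, the product of effective equivalence relations on
the factors, i.e. the kernel pair of `f` and the kernel pair of
`⟨π₁ ≫ g, π₂ ≫ h⟩ : X ⟶ C' ⨯ D` coincide as subobjects of `X × X`. -/
def HasFactorableCongruences {C : Type u} [Category.{v} C] [HasFiniteLimits C]
    (X : C) : Prop :=
  ∀ ⦃Y A B : C⦄ (f : X ⟶ Y) (π₁ : X ⟶ A) (π₂ : X ⟶ B), IsBinaryProduct π₁ π₂ →
    ∃ (C' D : C) (g : A ⟶ C') (h : B ⟶ D),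
      ∀ ⦃Z : C⦄ (a b : Z ⟶ X),
        a ≫ f = b ≫ f ↔
          a ≫ prod.lift (π₁ ≫ g) (π₂ ≫ h) = b ≫ prod.lift (π₁ ≫ g) (π₂ ≫ h)

namespace FactAux

section
variable {D : Type u} [Category.{v} D]

lemma isRegEpi_iff {X Y : D} (f : X ⟶ Y) : IsRegularEpimorphism f ↔ IsRegularEpi f := by
  constructor
  · rintro ⟨W, a, b, h, ⟨hc⟩⟩
    exact ⟨⟨⟨W, a, b, h, hc⟩⟩⟩
  · rintro ⟨⟨⟨W, a, b, h, hc⟩⟩⟩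
    exact ⟨W, a, b, h, ⟨hc⟩⟩

/-- A regular epi descends any morphism whose kernel pair contains its own. -/
lemma regEpi_desc {X Y T : D} (f : X ⟶ Y) [IsRegularEpi f] (u : X ⟶ T)
    (h : ∀ ⦃Z : D⦄ (a b : Z ⟶ X), a ≫ f = b ≫ f → a ≫ u = b ≫ u) :
    ∃ v : Y ⟶ T, f ≫ v = u :=
  ⟨IsRegularEpi.desc f u (h _ _ (IsRegularEpi.w f)), IsRegularEpi.fac f u _⟩

lemma prod_ext {X A B Z : D} {p : X ⟶ A} {q : X ⟶ B} (h : IsBinaryProduct p q)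
    {a b : Z ⟶ X} (h1 : a ≫ p = b ≫ p) (h2 : a ≫ q = b ≫ q) : a = b := by
  obtain ⟨h⟩ := h
  exact BinaryFan.IsLimit.hom_ext h h1 h2

lemma prod_lift {X A B Z : D} {p : X ⟶ A} {q : X ⟶ B} (h : IsBinaryProduct p q)
    (a : Z ⟶ A) (b : Z ⟶ B) : ∃ l : Z ⟶ X, l ≫ p = a ∧ l ≫ q = b := by
  obtain ⟨h⟩ := h
  obtain ⟨l, h1, h2⟩ := BinaryFan.IsLimit.lift' h a b
  exact ⟨l, h1, h2⟩

lemma prod_symm {X A B : D} {p : X ⟶ A} {q : X ⟶ B} (h : IsBinaryProduct p q) :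
    IsBinaryProduct q p := by
  obtain ⟨h⟩ := h
  exact ⟨BinaryFan.isLimitFlip h⟩

end

variable {D : Type u} [Category.{v} D]

lemma toRegular [HasFiniteLimits D] [IsRegularCategory D] : Regular D where
  hasCoequalizer_of_isKernelPair := by
    intro X Y Z f g₁ g₂ h
    have := IsRegularCategory.hasCoequalizer_kernelPair f
    have e1 : h.isoPullback.inv ≫ g₁ = pullback.fst f f := h.isoPullback_inv_fst
    have e2 : h.isoPullback.inv ≫ g₂ = pullback.snd f f := h.isoPullback_inv_snd
    have e1' : h.isoPullback.hom ≫ pullback.fst f f = g₁ := h.isoPullback_hom_fst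
    have e2' : h.isoPullback.hom ≫ pullback.snd f f = g₂ := h.isoPullback_hom_snd
    exact hasColimit_of_iso (parallelPair.ext h.isoPullback (Iso.refl _)
      (by simp) (by simp) : parallelPair g₁ g₂ ≅ parallelPair (pullback.fst f f) (pullback.snd f f))
  regularEpiIsStableUnderBaseChange := by
    refine MorphismProperty.IsStableUnderBaseChange.mk' ?_
    intro X Y S f g _ hg
    have h1 : IsRegularEpi (pullback.snd g f) :=
      (isRegEpi_iff _).1 (IsRegularCategory.regularEpi_stable g f ((isRegEpi_iff _).2 hg))
    have : pullback.fst f g = (pullbackSymmetry f g).hom ≫ pullback.snd g f := by simp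
    rw [this]
    exact (MorphismProperty.cancel_left_of_respectsIso (.regularEpi D) _ _).2 h1

variable [Regular D]

lemma comp_regEpi {X Y Z : D} (f : X ⟶ Y) (g : Y ⟶ Z) [IsRegularEpi f] [IsRegularEpi g] :
    IsRegularEpi (f ≫ g) := by
  have : StrongEpi (f ≫ g) := strongEpi_comp f g
  infer_instance

lemma right_regEpi {X Y Z : D} (f : X ⟶ Y) (g : Y ⟶ Z) [IsRegularEpi (f ≫ g)] :
    IsRegularEpi g := by
  have : StrongEpi g := strongEpi_of_strongEpi f g
  infer_instance

lemma regEpi_of_isPullback {P X Y Z : D} {f' : P ⟶ X} {g' : P ⟶ Y} {g : X ⟶ Z} {f : Y ⟶ Z}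
    (h : IsPullback f' g' g f) [hg : IsRegularEpi f] : IsRegularEpi f' :=
  Regular.regularEpiIsStableUnderBaseChange.of_isPullback h.flip hg

/-- Every morphism can be replaced by a regular epi with the same kernel pair. -/
lemma exists_regEpi {X Y : D} (f : X ⟶ Y) :
    ∃ (I : D) (e : X ⟶ I), IsRegularEpi e ∧
      ∀ ⦃Z : D⦄ (a b : Z ⟶ X), a ≫ f = b ≫ f ↔ a ≫ e = b ≫ e := by
  refine ⟨_, (Regular.strongEpiMonoFactorisation f).e, inferInstance, fun Z a b => ?_⟩
  rw [← cancel_mono (Regular.strongEpiMonoFactorisation f).m]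
  simp

lemma global_right {X Y : D} (f : X ⟶ Y) [IsRegularEpi (terminal.from X)] :
    IsRegularEpi (terminal.from Y) := by
  have : f ≫ terminal.from Y = terminal.from X := Subsingleton.elim _ _
  have : IsRegularEpi (f ≫ terminal.from Y) := by rwa [this]
  exact right_regEpi f _

lemma fst_regEpi {X A B : D} {p : X ⟶ A} {q : X ⟶ B} (h : IsBinaryProduct p q)
    [IsRegularEpi (terminal.from B)] : IsRegularEpi p := by
  obtain ⟨h⟩ := h
  have hB : IsRegularEpi (terminalIsTerminal.from B) := by
    rwa [Subsingleton.elim (terminalIsTerminal.from B) (terminal.from B)]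
  exact regEpi_of_isPullback (f := terminalIsTerminal.from B)
    (IsPullback.of_is_product h terminalIsTerminal)

lemma map_regEpi {A₁ A₂ B₁ B₂ : D} (p₁ : A₁ ⟶ B₁) (p₂ : A₂ ⟶ B₂) [IsRegularEpi p₁]
    [IsRegularEpi p₂] : IsRegularEpi (prod.map p₁ p₂) := by
  have h1 : IsPullback (prod.map p₁ (𝟙 A₂)) prod.fst prod.fst p₁ := by
    refine ⟨⟨by simp⟩, ⟨PullbackCone.IsLimit.mk _ (fun s => prod.lift s.snd (s.fst ≫ prod.snd))
      ?_ ?_ ?_⟩⟩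
    · intro s; ext <;> simp [s.condition, prod.lift_fst, prod.lift_snd]
    · intro s; simp [prod.lift_fst, prod.lift_snd]
    · intro s m h1 h2
      ext
      · simpa [prod.lift_fst, prod.lift_snd] using h2
      · simp [← h1, prod.lift_fst, prod.lift_snd]
  have h2 : IsPullback (prod.map (𝟙 B₁) p₂) prod.snd prod.snd p₂ := by
    refine ⟨⟨by simp⟩, ⟨PullbackCone.IsLimit.mk _ (fun s => prod.lift (s.fst ≫ prod.fst) s.snd)
      ?_ ?_ ?_⟩⟩
    · intro s; ext <;> simp [s.condition, prod.lift_fst, prod.lift_snd]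
    · intro s; simp [prod.lift_fst, prod.lift_snd]
    · intro s m h1 h2
      ext
      · simp [← h1, prod.lift_fst, prod.lift_snd]
      · simpa [prod.lift_fst, prod.lift_snd] using h2
  have := regEpi_of_isPullback h1
  have := regEpi_of_isPullback h2
  have e : prod.map p₁ p₂ = prod.map p₁ (𝟙 A₂) ≫ prod.map (𝟙 B₁) p₂ := by simp
  rw [e]
  exact comp_regEpi _ _

/-- Key lemma: a square is a pushout as soon as `ker p₁ × Δ ≤ ker f`. -/
lemma key_pushout {X A₁ A₂ Y B₁ : D} {π₁ : X ⟶ A₁} {π₂ : X ⟶ A₂} {f : X ⟶ Y} {p₁ : A₁ ⟶ B₁}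
    {π₁' : Y ⟶ B₁} (hX : IsRegularEpi (terminal.from X)) (hp : IsBinaryProduct π₁ π₂)
    [IsRegularEpi f] [IsRegularEpi p₁] (w : π₁ ≫ p₁ = f ≫ π₁')
    (h : ∀ ⦃Z : D⦄ (s t : Z ⟶ X), s ≫ π₁ ≫ p₁ = t ≫ π₁ ≫ p₁ → s ≫ π₂ = t ≫ π₂ →
      s ≫ f = t ≫ f) :
    IsMPushout (regularEpis D) π₁ f p₁ π₁' := by
  have hA₁ : IsRegularEpi (terminal.from A₁) := global_right π₁
  have hA₂ : IsRegularEpi (terminal.from A₂) := global_right π₂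
  have hπ : IsRegularEpi π₁ := fst_regEpi hp
  have hcomp : IsRegularEpi (f ≫ π₁') := by rw [← w]; exact comp_regEpi _ _
  have hπ' : IsRegularEpi π₁' := right_regEpi f _
  have desc : ∀ {T : D} (u : A₁ ⟶ T) (z : Y ⟶ T), π₁ ≫ u = f ≫ z → ∃ v, p₁ ≫ v = u := by
    intro T u z huz
    refine regEpi_desc p₁ u ?_
    intro K k₁ k₂ hk
    obtain ⟨s, s1, s2⟩ := prod_lift hp (prod.fst (X := K) (Y := A₂) ≫ k₁) prod.snd
    obtain ⟨t, t1, t2⟩ := prod_lift hp (prod.fst (X := K) (Y := A₂) ≫ k₂) prod.snd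
    have hst : s ≫ f = t ≫ f := by
      apply h
      · rw [reassoc_of% s1, reassoc_of% t1, hk]
      · rw [s2, t2]
    have hfst : IsRegularEpi (prod.fst : K ⨯ A₂ ⟶ K) :=
      fst_regEpi (q := (prod.snd : K ⨯ A₂ ⟶ A₂)) ⟨prodIsProd K A₂⟩
    rw [← cancel_epi (prod.fst : K ⨯ A₂ ⟶ K), ← reassoc_of% s1, ← reassoc_of% t1, huz,
      reassoc_of% hst]
  refine ⟨⟨⟨w⟩, ⟨PushoutCocone.IsColimit.mk _
    (fun s => (desc s.inl s.inr s.condition).choose) ?_ ?_ ?_⟩⟩,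
    (isRegEpi_iff _).2 inferInstance, (isRegEpi_iff _).2 inferInstance⟩
  · intro s
    exact (desc s.inl s.inr s.condition).choose_spec
  · intro s
    rw [← cancel_epi f, ← reassoc_of% w, (desc s.inl s.inr s.condition).choose_spec, s.condition]
  · intro s m h1 h2
    rw [← cancel_epi p₁, h1, (desc s.inl s.inr s.condition).choose_spec]

/-- Factorability through regular epis together with the resulting pushouts. -/
lemma factor_pushouts {X Y A B : D} (hX : IsRegularEpi (terminal.from X))
    (hF : HasFactorableCongruences X) (f : X ⟶ Y) [IsRegularEpi f] {π₁ : X ⟶ A} {π₂ : X ⟶ B}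
    (hp : IsBinaryProduct π₁ π₂) :
    ∃ (P Q : D) (g : A ⟶ P) (h : B ⟶ Q) (g' : Y ⟶ P) (h' : Y ⟶ Q),
      IsMPushout (regularEpis D) π₁ f g g' ∧ IsMPushout (regularEpis D) π₂ f h h' ∧
      ∀ ⦃Z : D⦄ (a b : Z ⟶ X), a ≫ π₁ ≫ g = b ≫ π₁ ≫ g → a ≫ π₂ ≫ h = b ≫ π₂ ≫ h →
        a ≫ f = b ≫ f := by
  obtain ⟨C', D', g₀, h₀, hk⟩ := hF f π₁ π₂ hp
  obtain ⟨P, g, hg, hgk⟩ := exists_regEpi g₀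
  obtain ⟨Q, h, hh, hhk⟩ := exists_regEpi h₀
  have hk' : ∀ ⦃Z : D⦄ (a b : Z ⟶ X), a ≫ f = b ≫ f ↔
      (a ≫ π₁ ≫ g = b ≫ π₁ ≫ g ∧ a ≫ π₂ ≫ h = b ≫ π₂ ≫ h) := by
    intro Z a b
    rw [hk, ← Category.assoc a π₁, ← Category.assoc b π₁, ← Category.assoc a π₂,
      ← Category.assoc b π₂, ← hgk, ← hhk]
    constructor
    · intro e
      have e1 := congrArg (· ≫ prod.fst) e
      have e2 := congrArg (· ≫ prod.snd) e
      simp only [Category.assoc, prod.lift_fst, prod.lift_snd] at e1 e2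
      simp [e1, e2]
    · rintro ⟨e1, e2⟩
      simp only [Category.assoc] at e1 e2
      ext <;> simpa [prod.lift_fst, prod.lift_snd]
  obtain ⟨g', hg'⟩ := regEpi_desc f (π₁ ≫ g) (fun Z a b e => ((hk' a b).1 e).1)
  obtain ⟨h', hh'⟩ := regEpi_desc f (π₂ ≫ h) (fun Z a b e => ((hk' a b).1 e).2)
  refine ⟨P, Q, g, h, g', h', ?_, ?_, fun Z a b e1 e2 => (hk' a b).2 ⟨e1, e2⟩⟩
  · refine key_pushout hX hp hg'.symm fun Z s t e1 e2 => (hk' s t).2 ⟨e1, ?_⟩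
    rw [reassoc_of% e2]
  · refine key_pushout hX (prod_symm hp) hh'.symm fun Z s t e1 e2 => (hk' s t).2 ⟨?_, e1⟩
    rw [reassoc_of% e2]

lemma forward (X : D) (hX : IsRegularEpi (terminal.from X)) (hF : HasFactorableCongruences X) :
    RegularlyCoextensive X where
  pushout_exists := by
    rintro Y A m p hm ⟨B, q, hpq⟩
    have := (isRegEpi_iff _).1 hm
    obtain ⟨P, Q, g, h, g', h', h1, -, -⟩ := factor_pushouts hX hF m hpq
    exact ⟨P, g, g', h1⟩
  isBinaryProduct_iff := by
    intro A₁ A₂ Y B₁ B₂ π₁ π₂ f p₁ p₂ π₁' π₂' hp hf hp₁ hp₂ w₁ w₂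
    have := (isRegEpi_iff _).1 hf
    have := (isRegEpi_iff _).1 hp₁
    have := (isRegEpi_iff _).1 hp₂
    constructor
    · intro hY
      refine ⟨key_pushout hX hp w₁ fun Z s t e1 e2 => ?_,
        key_pushout hX (prod_symm hp) w₂ fun Z s t e1 e2 => ?_⟩
      · apply prod_ext hY
        · simpa [← w₁] using e1
        · simp [← w₂, reassoc_of% e2]
      · apply prod_ext hY
        · simp [← w₁, reassoc_of% e2]
        · simpa [← w₂] using e1
    · rintro ⟨⟨hP₁, -, -⟩, ⟨hP₂, -, -⟩⟩
      obtain ⟨P, Q, g, h, g', h', ⟨h1, -, -⟩, ⟨h2, -, -⟩, hk⟩ := factor_pushouts hX hF f hp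
      have eg : p₁ ≫ hP₁.desc g g' h1.w = g := hP₁.inl_desc _ _ _
      have eh : p₂ ≫ hP₂.desc h h' h2.w = h := hP₂.inl_desc _ _ _
      -- the map `X ⟶ B₁ ⨯ B₂` is a regular epi
      have hr : IsRegularEpi (prod.lift (π₁ ≫ p₁) (π₂ ≫ p₂)) := by
        obtain ⟨l, l1, l2⟩ := prod_lift hp (prod.fst : A₁ ⨯ A₂ ⟶ A₁) prod.snd
        have hm := map_regEpi p₁ p₂
        have e : l ≫ prod.lift (π₁ ≫ p₁) (π₂ ≫ p₂) = prod.map p₁ p₂ := by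
          ext
          · simp [reassoc_of% l1, prod.lift_fst, prod.lift_snd]
          · simp [reassoc_of% l2, prod.lift_fst, prod.lift_snd]
        have : IsRegularEpi (l ≫ prod.lift (π₁ ≫ p₁) (π₂ ≫ p₂)) := by rwa [e]
        exact right_regEpi l _
      obtain ⟨v, hv⟩ := regEpi_desc (prod.lift (π₁ ≫ p₁) (π₂ ≫ p₂)) f (by
        intro Z a b e
        have e1 := congrArg (· ≫ prod.fst) e
        have e2 := congrArg (· ≫ prod.snd) e
        simp only [Category.assoc, prod.lift_fst, prod.lift_snd] at e1 e2
        apply hk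
        · rw [← eg, reassoc_of% e1]
        · rw [← eh, reassoc_of% e2])
      have hfl : f ≫ prod.lift π₁' π₂' = prod.lift (π₁ ≫ p₁) (π₂ ≫ p₂) := by
        ext <;> simp [w₁, w₂]
      have i1 : prod.lift π₁' π₂' ≫ v = 𝟙 Y := by
        rw [← cancel_epi f, reassoc_of% hfl, hv, Category.comp_id]
      have i2 : v ≫ prod.lift π₁' π₂' = 𝟙 _ := by
        rw [← cancel_epi (prod.lift (π₁ ≫ p₁) (π₂ ≫ p₂)), reassoc_of% hv, hfl, Category.comp_id]
      exact ⟨IsLimit.ofIsoLimit (prodIsProd B₁ B₂)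
        (BinaryFan.ext ⟨v, prod.lift π₁' π₂', i2, i1⟩
          (by
            have := congrArg (· ≫ prod.fst) i2
            simpa [prod.lift_fst, prod.lift_snd] using this.symm)
          (by
            have := congrArg (· ≫ prod.snd) i2
            simpa [prod.lift_fst, prod.lift_snd] using this.symm))⟩

lemma backward (X : D) (hR : RegularlyCoextensive X) : HasFactorableCongruences X := by
  intro Y A B f π₁ π₂ hp
  obtain ⟨I, e, he, hk⟩ := exists_regEpi f
  have he' : regularEpis D e := (isRegEpi_iff _).2 he
  obtain ⟨P, g, g', hP⟩ := hR.pushout_exists e π₁ he' ⟨_, _, hp⟩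
  obtain ⟨Q, h, h', hQ⟩ := hR.pushout_exists e π₂ he' ⟨_, _, prod_symm hp⟩
  have hI := (hR.isBinaryProduct_iff π₁ π₂ e g h g' h' hp he' hP.2.1 hQ.2.1 hP.1.w hQ.1.w).2
    ⟨hP, hQ⟩
  refine ⟨P, Q, g, h, fun Z a b => ?_⟩
  rw [hk]
  constructor
  · intro hab
    ext
    · simp [hP.1.w, reassoc_of% hab, prod.lift_fst, prod.lift_snd]
    · simp [hQ.1.w, reassoc_of% hab, prod.lift_fst, prod.lift_snd]
  · intro hab
    have e1 := congrArg (· ≫ prod.fst) hab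
    have e2 := congrArg (· ≫ prod.snd) hab
    simp only [Category.assoc, prod.lift_fst, prod.lift_snd] at e1 e2
    apply prod_ext hI
    · simpa [← hP.1.w] using e1
    · simpa [← hQ.1.w] using e2

end FactAux

/-- An object with global support in a regular category has factorable congruences
if and only if it is regularly-coextensive. -/
theorem hasFactorableCongruences_iff_regularlyCoextensive
    {C : Type u} [Category.{v} C] [HasFiniteLimits C] [IsRegularCategory C]
    (X : C) (hgs : HasGlobalSupport X) :
    HasFactorableCongruences X ↔ RegularlyCoextensive X := by
  have hC : Regular C := FactAux.toRegular
  exact ⟨FactAux.forward X ((FactAux.isRegEpi_iff _).1 hgs), FactAux.backward X⟩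
end

section
/- Let C be a regular category and X an object with global support. If X is regularly-coextensive, then X is projection-coextensive. -/
open CategoryTheory CategoryTheory.Limits

universe v u

variable {C : Type u} [Category.{v} C]

theorem isBinaryProduct_swap {C : Type u} [Category.{v} C] {X A B : C} {p : X ⟶ A} {q : X ⟶ B}
    (h : IsBinaryProduct p q) : IsBinaryProduct q p :=
  h.elim fun l => ⟨BinaryFan.isLimitFlip l⟩

theorem regEpi_desc {C : Type u} [Category.{v} C] {X Y : C} {f : X ⟶ Y}
    (hf : IsRegularEpimorphism f) : Epi f := by
  obtain ⟨W, a, b, h, ⟨l⟩⟩ := hf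
  exact ⟨fun g k e => Cofork.IsColimit.hom_ext l e⟩

theorem regEpi_of_iso {C : Type u} [Category.{v} C] {X X' Y : C} {f : X ⟶ Y}
    (hf : IsRegularEpimorphism f) (e : X' ≅ X) (g : X' ⟶ Y) (hg : e.hom ≫ f = g) :
    IsRegularEpimorphism g := by
  have hepi := regEpi_desc hf
  obtain ⟨W, a, b, h, ⟨l⟩⟩ := hf
  subst hg
  refine ⟨W, a ≫ e.inv, b ≫ e.inv, by simpa using h, ⟨Cofork.IsColimit.mk' _ fun s => ?_⟩⟩
  have hs : a ≫ (e.inv ≫ s.π) = b ≫ (e.inv ≫ s.π) := by simpa using s.condition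
  refine ⟨Cofork.IsColimit.desc l _ hs, ?_, ?_⟩
  · have := Cofork.IsColimit.π_desc' l _ hs
    simp only [Cofork.π_ofπ] at this
    simp [this]
  · intro m hm
    have h1 := Cofork.IsColimit.π_desc' l _ hs
    simp only [Cofork.π_ofπ] at h1 hm
    rw [← cancel_epi f, h1, ← hm]
    simp

theorem globalSupport_of_hom_s17 {C : Type u} [Category.{v} C] [HasFiniteLimits C]
    [IsRegularCategory C] {X B : C} (hgs : HasGlobalSupport X) (h : X ⟶ B) :
    HasGlobalSupport B := by
  have hp := IsRegularCategory.regularEpi_stable (terminal.from X) (terminal.from B) hgs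
  have hepi := regEpi_desc hp
  obtain ⟨W, a, b, hab, ⟨l⟩⟩ := hgs
  refine ⟨B ⨯ B, prod.fst, prod.snd, Subsingleton.elim _ _,
    ⟨Cofork.IsColimit.mk' _ fun s => ?_⟩⟩
  have key : ∀ {Z : C} (x y : Z ⟶ B), x ≫ s.π = y ≫ s.π := fun x y => by
    have hc : (prod.fst : B ⨯ B ⟶ B) ≫ s.π = (prod.snd : B ⨯ B ⟶ B) ≫ s.π := s.condition
    have e1 : x = prod.lift x y ≫ prod.fst := (prod.lift_fst x y).symm
    have e2 : y = prod.lift x y ≫ prod.snd := (prod.lift_snd x y).symm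
    calc x ≫ s.π = (prod.lift x y ≫ prod.fst) ≫ s.π := congrArg (· ≫ s.π) e1
      _ = prod.lift x y ≫ (prod.fst ≫ s.π) := Category.assoc _ _ _
      _ = prod.lift x y ≫ (prod.snd ≫ s.π) := congrArg (prod.lift x y ≫ ·) hc
      _ = (prod.lift x y ≫ prod.snd) ≫ s.π := (Category.assoc _ _ _).symm
      _ = y ≫ s.π := congrArg (· ≫ s.π) e2.symm
  have hs : a ≫ (h ≫ s.π) = b ≫ (h ≫ s.π) := by
    simpa using key (a ≫ h) (b ≫ h)
  have h1 := Cofork.IsColimit.π_desc' l _ hs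
  simp only [Cofork.π_ofπ] at h1
  have h2 : terminal.from B ≫ Cofork.IsColimit.desc l _ hs = s.π := by
    rw [← cancel_epi (pullback.snd (terminal.from X) (terminal.from B)), ← Category.assoc,
      Subsingleton.elim (pullback.snd (terminal.from X) (terminal.from B) ≫ terminal.from B)
        (pullback.fst _ _ ≫ terminal.from X), Category.assoc, h1, ← Category.assoc]
    exact key _ _
  refine ⟨Cofork.IsColimit.desc l _ hs, h2, ?_⟩
  intro m hm
  simp only [Cofork.π_ofπ] at hm
  have h3 : terminal.from X ≫ m = h ≫ s.π := by
    rw [← hm, ← Category.assoc, Subsingleton.elim (h ≫ terminal.from B) (terminal.from X)]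
  exact Cofork.IsColimit.hom_ext l (by simp only [Cofork.π_ofπ]; rw [h3, h1])

theorem regEpi_of_projection {C : Type u} [Category.{v} C] [HasFiniteLimits C]
    [IsRegularCategory C] {X A : C} (hgs : HasGlobalSupport X) {p : X ⟶ A}
    (hp : IsProductProjection p) : IsRegularEpimorphism p := by
  obtain ⟨B, q, ⟨l⟩⟩ := hp
  have hB := globalSupport_of_hom_s17 hgs q
  have hr := IsRegularCategory.regularEpi_stable (terminal.from B) (terminal.from A) hB
  obtain ⟨k, hk1, hk2⟩ : ∃ k : pullback (terminal.from B) (terminal.from A) ⟶ X,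
      k ≫ p = pullback.snd _ _ ∧ k ≫ q = pullback.fst _ _ := by
    obtain ⟨k, hk1, hk2⟩ := BinaryFan.IsLimit.lift' l
      (pullback.snd (terminal.from B) (terminal.from A)) (pullback.fst _ _)
    exact ⟨k, hk1, hk2⟩
  obtain ⟨r, hr1, hr2⟩ : ∃ r : X ⟶ pullback (terminal.from B) (terminal.from A),
      r ≫ pullback.fst _ _ = q ∧ r ≫ pullback.snd _ _ = p :=
    ⟨pullback.lift q p (Subsingleton.elim _ _), pullback.lift_fst _ _ _, pullback.lift_snd _ _ _⟩
  have hrk : r ≫ k = 𝟙 X := by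
    apply BinaryFan.IsLimit.hom_ext l
    · change (r ≫ k) ≫ p = 𝟙 X ≫ p
      rw [Category.assoc, hk1, hr2, Category.id_comp]
    · change (r ≫ k) ≫ q = 𝟙 X ≫ q
      rw [Category.assoc, hk2, hr1, Category.id_comp]
  have hkr : k ≫ r = 𝟙 _ := by
    apply pullback.hom_ext
    · rw [Category.assoc, hr1, hk2, Category.id_comp]
    · rw [Category.assoc, hr2, hk1, Category.id_comp]
  exact regEpi_of_iso hr ⟨r, k, hrk, hkr⟩ p hr2

theorem pushout_leg_projection {C : Type u} [Category.{v} C] {X Y A P : C}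
    (hX : RegularlyCoextensive X) {m : X ⟶ Y} {p : X ⟶ A} {a : A ⟶ P} {b : Y ⟶ P}
    (hm : IsRegularEpimorphism m) (hp : IsProductProjection p)
    (h : IsMPushout (regularEpis C) p m a b) : IsProductProjection b := by
  obtain ⟨A', p', hpp⟩ := hp
  obtain ⟨P', a', b', h'⟩ := hX.pushout_exists m p' hm ⟨A, p, isBinaryProduct_swap hpp⟩
  exact ⟨P', b', (hX.isBinaryProduct_iff p p' m a a' b b' hpp hm h.2.1 h'.2.1 h.1.w h'.1.w).2
    ⟨h, h'⟩⟩

/-- In a regular category, a regularly-coextensive object with global support is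
projection-coextensive. -/
theorem projectionCoextensive_of_regularlyCoextensive
    {C : Type u} [Category.{v} C] [HasFiniteLimits C] [IsRegularCategory C]
    (X : C) (hgs : HasGlobalSupport X) (hX : RegularlyCoextensive X) :
    ProjectionCoextensive X := by
  refine ⟨?_, ?_⟩
  · intro Y A m p hm hp
    have hm' := regEpi_of_projection hgs hm
    have hp' := regEpi_of_projection hgs hp
    obtain ⟨P, a, b, h⟩ := hX.pushout_exists m p hm' hp
    exact ⟨P, a, b, h.1, pushout_leg_projection hX hp' hm ⟨h.1.flip, h.2.2, h.2.1⟩,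
      pushout_leg_projection hX hm' hp h⟩
  · intro A₁ A₂ Y B₁ B₂ π₁ π₂ f p₁ p₂ π₁' π₂' hπ hf hp₁ hp₂ w₁ w₂
    have hY := globalSupport_of_hom_s17 hgs f
    have hf' := regEpi_of_projection hgs hf
    have hp₁' := regEpi_of_projection (globalSupport_of_hom_s17 hgs π₁) hp₁
    have hp₂' := regEpi_of_projection (globalSupport_of_hom_s17 hgs π₂) hp₂
    have key := hX.isBinaryProduct_iff π₁ π₂ f p₁ p₂ π₁' π₂' hπ hf' hp₁' hp₂' w₁ w₂
    constructor
    · intro h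
      obtain ⟨h1, h2⟩ := key.1 h
      exact ⟨⟨h1.1, hp₁, ⟨_, _, h⟩⟩, ⟨h2.1, hp₂, ⟨_, _, isBinaryProduct_swap h⟩⟩⟩
    · rintro ⟨h1, h2⟩
      exact key.2 ⟨⟨h1.1, hp₁', regEpi_of_projection hY h1.2.2⟩,
        ⟨h2.1, hp₂', regEpi_of_projection hY h2.2.2⟩⟩
end
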